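/- arXiv:2406.13980 — 2 statements merged into one kernel-verified Lean document; each statement's English description precedes it below -/
import Mathlib

section
/- Let R be a commutative ring, k ≥ 1, s ∈ R, β ∈ R^k a column vector, and H a symmetric k×k matrix over R. Let M be the symmetric (k+1)×(k+1) block matrix [[s, βᵀ], [β, H]], and define X₊ := [[s, 0], [β, s·I_k]] and X₋ := [[s, 0], [−β, s·I_k]] (block lower-triangular (k+1)×(k+1) matrices). Then: (i) X₋·X₊ = X₊·X₋ = s²·I_{k+1}; (ii) X₋·M·X₋ᵀ equals the block-diagonal matrix with blocks s³ and s·(s·H − β·βᵀ); (iii) s⁴·M = X₊·D·X₊ᵀ, where D is the block-diagonal matrix with blocks s³ and s·(s·H − β·βᵀ). -/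
open Matrix

/-- block identities for the symmetric pivoting construction used in
Schmüdgen's scalar description of matrix inequalities. -/
theorem block_pivot_identities (R : Type*) [CommRing R] (k : ℕ) (hk : 1 ≤ k)
    (s : R) (β : Fin k → R) (H : Matrix (Fin k) (Fin k) R) (hH : H.IsSymm) :
    let M : Matrix (Fin 1 ⊕ Fin k) (Fin 1 ⊕ Fin k) R :=
      Matrix.fromBlocks (Matrix.of fun _ _ => s) (Matrix.of fun _ j => β j)
        (Matrix.of fun i _ => β i) H
    let Xp : Matrix (Fin 1 ⊕ Fin k) (Fin 1 ⊕ Fin k) R :=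
      Matrix.fromBlocks (Matrix.of fun _ _ => s) 0 (Matrix.of fun i _ => β i) (s • 1)
    let Xm : Matrix (Fin 1 ⊕ Fin k) (Fin 1 ⊕ Fin k) R :=
      Matrix.fromBlocks (Matrix.of fun _ _ => s) 0 (Matrix.of fun i _ => -β i) (s • 1)
    let D : Matrix (Fin 1 ⊕ Fin k) (Fin 1 ⊕ Fin k) R :=
      Matrix.fromBlocks (Matrix.of fun _ _ => s ^ 3) 0 0
        (s • (s • H - Matrix.of fun i j => β i * β j))
    Xm * Xp = s ^ 2 • (1 : Matrix (Fin 1 ⊕ Fin k) (Fin 1 ⊕ Fin k) R) ∧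
    Xp * Xm = s ^ 2 • (1 : Matrix (Fin 1 ⊕ Fin k) (Fin 1 ⊕ Fin k) R) ∧
    Xm * M * Xmᵀ = D ∧
    s ^ 4 • M = Xp * D * Xpᵀ := by
  intro M Xp Xm D
  refine ⟨?_, ?_, ?_, ?_⟩
  all_goals
    simp only [M, Xp, Xm, D, Matrix.fromBlocks_transpose, Matrix.fromBlocks_multiply,
      ← Matrix.fromBlocks_one, Matrix.fromBlocks_smul]
    congr 1 <;> ext i j <;>
      simp [Matrix.mul_apply, Matrix.one_apply, Fin.fin_one_eq_zero] <;>
      first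
        | done
        | ring
        | (split_ifs <;> simp <;> ring)
end

section
/- For every real number ε, the minimum of (x − ε·x₀)² + x₀² over all (x₀, x) ∈ ℝ² with x₀² + x² = 1 equals 1 + ε²/2 − √(ε² + ε⁴/4). In particular, this minimum value tends to 0 as ε → ∞, while it is always positive. -/
open Filter

lemma aux_pos (ε : ℝ) : 0 < 1 + ε ^ 2 / 2 - Real.sqrt (ε ^ 2 + ε ^ 4 / 4) := by
  have : Real.sqrt (ε ^ 2 + ε ^ 4 / 4) < 1 + ε ^ 2 / 2 := by
    rw [Real.sqrt_lt' (by positivity)]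
    nlinarith
  linarith

lemma aux_least (ε : ℝ) :
    IsLeast {r : ℝ | ∃ x₀ x : ℝ, x₀ ^ 2 + x ^ 2 = 1 ∧ r = (x - ε * x₀) ^ 2 + x₀ ^ 2}
        (1 + ε ^ 2 / 2 - Real.sqrt (ε ^ 2 + ε ^ 4 / 4)) := by
  rcases eq_or_ne ε 0 with rfl | hε
  · constructor
    · exact ⟨1, 0, by norm_num, by norm_num⟩
    · rintro r ⟨x₀, x, h, rfl⟩
      norm_num
      linarith
  have hs2 : Real.sqrt (ε ^ 2 + ε ^ 4 / 4) ^ 2 = ε ^ 2 + ε ^ 4 / 4 :=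
    Real.sq_sqrt (by positivity)
  have hs : 0 < Real.sqrt (ε ^ 2 + ε ^ 4 / 4) := Real.sqrt_pos.2 (by positivity)
  set s := Real.sqrt (ε ^ 2 + ε ^ 4 / 4) with hsdef
  clear_value s
  constructor
  · have hN : 0 < ε ^ 2 + (s + ε ^ 2 / 2) ^ 2 := by positivity
    have hN2 : Real.sqrt (ε ^ 2 + (s + ε ^ 2 / 2) ^ 2) ^ 2 = ε ^ 2 + (s + ε ^ 2 / 2) ^ 2 :=
      Real.sq_sqrt hN.le
    have hNp : 0 < Real.sqrt (ε ^ 2 + (s + ε ^ 2 / 2) ^ 2) := Real.sqrt_pos.2 hN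
    set N := Real.sqrt (ε ^ 2 + (s + ε ^ 2 / 2) ^ 2)
    clear_value N
    refine ⟨ε / N, (s + ε ^ 2 / 2) / N, ?_, ?_⟩
    · field_simp
      linarith
    · have : ((s + ε ^ 2 / 2) / N - ε * (ε / N)) ^ 2 + (ε / N) ^ 2
          = ((s - ε ^ 2 / 2) ^ 2 + ε ^ 2) / N ^ 2 := by
        field_simp
        ring
      rw [this, eq_div_iff (by positivity), hN2]
      linear_combination (-ε ^ 2 / 2 - s) * hs2
  · rintro r ⟨x₀, x, h, rfl⟩
    have key : 2 * s * ((x - ε * x₀) ^ 2 + x₀ ^ 2 - (1 + ε ^ 2 / 2 - s))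
        = ((s - ε ^ 2 / 2) * x - ε * x₀) ^ 2 + ((s + ε ^ 2 / 2) * x₀ - ε * x) ^ 2 := by
      linear_combination (x₀ ^ 2 + x ^ 2) * hs2 + 2 * s * (1 + ε ^ 2 / 2 - s) * h
    have h0 : 0 ≤ (x - ε * x₀) ^ 2 + x₀ ^ 2 - (1 + ε ^ 2 / 2 - s) := by
      refine (mul_nonneg_iff_of_pos_left (c := 2 * s) (by positivity)).1 ?_
      rw [key]
      positivity
    linarith

/-- the minimum of the homogenization of `(x-ε)²+1` on the unit circle. -/
theorem min_homogenization_on_circle :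
    (∀ ε : ℝ,
      IsLeast {r : ℝ | ∃ x₀ x : ℝ, x₀ ^ 2 + x ^ 2 = 1 ∧ r = (x - ε * x₀) ^ 2 + x₀ ^ 2}
        (1 + ε ^ 2 / 2 - Real.sqrt (ε ^ 2 + ε ^ 4 / 4)) ∧
      0 < 1 + ε ^ 2 / 2 - Real.sqrt (ε ^ 2 + ε ^ 4 / 4)) ∧
    Tendsto (fun ε : ℝ => 1 + ε ^ 2 / 2 - Real.sqrt (ε ^ 2 + ε ^ 4 / 4)) atTop (nhds 0) := by
  refine ⟨fun ε => ⟨aux_least ε, aux_pos ε⟩, ?_⟩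
  refine tendsto_of_tendsto_of_tendsto_of_le_of_le' tendsto_const_nhds
    (tendsto_inv_atTop_zero (𝕜 := ℝ)) (Eventually.of_forall fun ε => (aux_pos ε).le) ?_
  filter_upwards [eventually_gt_atTop 0] with ε hε
  have hp := aux_pos ε
  have hs2 : Real.sqrt (ε ^ 2 + ε ^ 4 / 4) ^ 2 = ε ^ 2 + ε ^ 4 / 4 :=
    Real.sq_sqrt (by positivity)
  have hs : 0 ≤ Real.sqrt (ε ^ 2 + ε ^ 4 / 4) := Real.sqrt_nonneg _
  set s := Real.sqrt (ε ^ 2 + ε ^ 4 / 4)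
  clear_value s
  rw [← one_div, le_div_iff₀ hε]
  have h1 : (1 + ε ^ 2 / 2 - s) * (1 + ε ^ 2 / 2 + s) = 1 := by
    linear_combination -hs2
  have h2 : ε ≤ 1 + ε ^ 2 / 2 + s := by nlinarith [sq_nonneg (ε - 1)]
  calc _ ≤ (1 + ε ^ 2 / 2 - s) * (1 + ε ^ 2 / 2 + s) := mul_le_mul_of_nonneg_left h2 hp.le
    _ = 1 := h1
end
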